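/- (Lemma 5.1(iii)) For every p ∈ {1,…,m}: { ⟨Q^p, X⟩ : X ∈ Γ^A, ⟨Q^i, X⟩ = 0 (i = 1,…,p−1), ⟨H^0, X⟩ = 1 } = { f_p(w) : w ∈ S_{p−1} }. In particular ζ(Γ^A ∩ J_{p−1}, Q^p, 1) := inf{ ⟨Q^p, X⟩ : X ∈ Γ^A ∩ J_{p−1}, ⟨H^0, X⟩ = 1 } equals inf{ f_p(w) : w ∈ S_{p−1} } (infima in the extended reals). -/

import Mathlib

open MvPolynomial

noncomputable section

open scoped Classical

variable {n : ℕ}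

/-- The vector `u^A(x)` of monomials `x^α` for `α ∈ A`. -/
def uA (A : Finset (Fin (n+1) →₀ ℕ)) (x : Fin (n+1) → ℝ) (a : A) : ℝ :=
  ∏ i, x i ^ (a : Fin (n+1) →₀ ℕ) i

/-- The rank-one moment matrix `u^A(x) u^A(x)ᵀ`. -/
def momMat (A : Finset (Fin (n+1) →₀ ℕ)) (x : Fin (n+1) → ℝ) : Matrix A A ℝ :=
  fun a b => uA A x a * uA A x b

/-- The cone `Γ^A = { u^A(x) u^A(x)ᵀ : x ∈ ℝ^{1+n}, x ≥ 0 }`. -/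
def GammaA (A : Finset (Fin (n+1) →₀ ℕ)) : Set (Matrix A A ℝ) :=
  { X | ∃ x : Fin (n+1) → ℝ, (∀ i, 0 ≤ x i) ∧ X = momMat A x }

/-- The extended completely positive cone `CPP^A = conv Γ^A`. -/
def CPPA (A : Finset (Fin (n+1) →₀ ℕ)) : Set (Matrix A A ℝ) :=
  convexHull ℝ (GammaA A)

/-- The trace inner product `⟨P, X⟩ = Σ_{a,b} P_{ab} X_{ab}`. -/
def ip {A : Finset (Fin (n+1) →₀ ℕ)} (P X : Matrix A A ℝ) : ℝ :=
  ∑ a : A, ∑ b : A, P a b * X a b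

/-- The matrix `H^0` whose `(α^ω, α^ω)` entry is `1` and all other entries are `0`. -/
def H0mat (A : Finset (Fin (n+1) →₀ ℕ)) (ω : ℕ) : Matrix A A ℝ :=
  fun a b =>
    if (a : Fin (n+1) →₀ ℕ) = Finsupp.single 0 ω ∧ (b : Fin (n+1) →₀ ℕ) = Finsupp.single 0 ω
    then 1 else 0

/-- `J_p = { X ∈ CPP^A : ⟨Q^i, X⟩ = 0 (i = 1,…,p) }`. -/
def Jset (A : Finset (Fin (n+1) →₀ ℕ)) (Q : ℕ → Matrix A A ℝ) (p : ℕ) :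
    Set (Matrix A A ℝ) :=
  { X ∈ CPPA A | ∀ i, 1 ≤ i → i ≤ p → ip (Q i) X = 0 }

/-- `S̄_p = { x ∈ ℝ^{1+n}_+ : f̄_i(x) = 0 (i = 1,…,p) }`. -/
def Sbar (fb : ℕ → MvPolynomial (Fin (n+1)) ℝ) (p : ℕ) : Set (Fin (n+1) → ℝ) :=
  { x | (∀ j, 0 ≤ x j) ∧ ∀ i, 1 ≤ i → i ≤ p → eval x (fb i) = 0 }

/-- `S̃_p = { w ∈ ℝ^n_+ : f̄_i(0, w) = 0 (i = 1,…,p) }`. -/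
def Stilde (fb : ℕ → MvPolynomial (Fin (n+1)) ℝ) (p : ℕ) : Set (Fin n → ℝ) :=
  { w | (∀ j, 0 ≤ w j) ∧ ∀ i, 1 ≤ i → i ≤ p → eval (Fin.cons 0 w) (fb i) = 0 }

/-- `S_p = { w ∈ ℝ^n_+ : f_i(w) = 0 (i = 1,…,p) }`. -/
def Sset (f : ℕ → MvPolynomial (Fin n) ℝ) (p : ℕ) : Set (Fin n → ℝ) :=
  { w | (∀ j, 0 ≤ w j) ∧ ∀ i, 1 ≤ i → i ≤ p → eval w (f i) = 0 }

/-- Infimum of a set of reals, taken in the extended reals. -/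
def erInf (s : Set ℝ) : EReal := sInf ((fun r : ℝ => (r : EReal)) '' s)

/-- `F` is a face of the convex set `C`. -/
def IsFace {V : Type*} [AddCommGroup V] [Module ℝ V] (C F : Set V) : Prop :=
  F ⊆ C ∧ Convex ℝ F ∧
    ∀ y ∈ C, ∀ z ∈ C, ∀ t : ℝ, 0 < t → t < 1 → (1 - t) • y + t • z ∈ F → y ∈ F ∧ z ∈ F

/-!
On `Γ^A`, the normalization `⟨H^0, X⟩ = 1` reads `x_0 ^ (2ω) = 1`, which forces `x_0 = 1` because
`x_0 ≥ 0` and `ω > 0`. The normalized slice of `Γ^A` is therefore the image of the nonnegative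
orthant under `w ↦ u^A(1, w) u^A(1, w)ᵀ`, and pairing such a matrix with `Q^i` returns `f_i(w)`.
-/

section

variable {A : Finset (Fin (n + 1) →₀ ℕ)} {ω : ℕ}

theorem uA_single {i : Fin (n + 1)} {k : ℕ} (h : Finsupp.single i k ∈ A)
    (x : Fin (n + 1) → ℝ) : uA A x ⟨Finsupp.single i k, h⟩ = x i ^ k := by
  refine (Finset.prod_eq_single i (fun j _ hj => ?_) (by simp)).trans (by simp)
  rw [Finsupp.single_eq_of_ne hj, pow_zero]

theorem ip_single (a b : A) (c : ℝ) (X : Matrix A A ℝ) :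
    ip (Matrix.single a b c) X = c * X a b := by
  simp [ip, Matrix.single_apply, ite_and]

theorem H0mat_eq_single (h : Finsupp.single 0 ω ∈ A) :
    H0mat A ω = Matrix.single ⟨Finsupp.single 0 ω, h⟩ ⟨Finsupp.single 0 ω, h⟩ 1 := by
  ext a b
  simp only [H0mat, Matrix.single_apply, Subtype.ext_iff, eq_comm]

theorem ip_H0mat_momMat (h : Finsupp.single 0 ω ∈ A) (x : Fin (n + 1) → ℝ) :
    ip (H0mat A ω) (momMat A x) = x 0 ^ (ω + ω) := by
  rw [H0mat_eq_single h, ip_single, one_mul, momMat, uA_single, pow_add]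

theorem ip_H0mat_momMat_eq_one_iff (h : Finsupp.single 0 ω ∈ A) (hω : ω ≠ 0)
    {x : Fin (n + 1) → ℝ} (hx : 0 ≤ x 0) :
    ip (H0mat A ω) (momMat A x) = 1 ↔ x 0 = 1 := by
  rw [ip_H0mat_momMat h, pow_eq_one_iff_of_nonneg hx (by lia)]

theorem setOf_mem_GammaA_ip_H0mat_eq_one (h : Finsupp.single 0 ω ∈ A) (hω : ω ≠ 0) :
    {X ∈ GammaA A | ip (H0mat A ω) X = 1} =
      (fun w : Fin n → ℝ => momMat A (Fin.cons 1 w)) '' {w | ∀ j, 0 ≤ w j} := by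
  ext X
  constructor
  · rintro ⟨⟨x, hx, rfl⟩, hX⟩
    have hx0 : x 0 = 1 := (ip_H0mat_momMat_eq_one_iff h hω (hx 0)).1 hX
    refine ⟨Fin.tail x, fun j => hx j.succ, ?_⟩
    simp only [← hx0, Fin.cons_self_tail]
  · rintro ⟨w, hw, rfl⟩
    have hx : ∀ i, 0 ≤ (Fin.cons 1 w : Fin (n + 1) → ℝ) i :=
      Fin.forall_fin_succ.2 ⟨zero_le_one, hw⟩
    exact ⟨⟨_, hx, rfl⟩, (ip_H0mat_momMat_eq_one_iff h hω (hx 0)).2 rfl⟩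

theorem GammaA_inter_Jset (Q : ℕ → Matrix A A ℝ) (p : ℕ) :
    GammaA A ∩ Jset A Q p = {X ∈ GammaA A | ∀ i, 1 ≤ i → i ≤ p → ip (Q i) X = 0} :=
  Set.ext fun _ => ⟨fun hX => ⟨hX.1, hX.2.2⟩,
    fun hX => ⟨hX.1, subset_convexHull ℝ _ hX.1, hX.2⟩⟩

theorem setOf_mem_GammaA_inter_Jset_ip_H0mat_eq_one (h : Finsupp.single 0 ω ∈ A) (hω : ω ≠ 0)
    {p : ℕ} {f : ℕ → MvPolynomial (Fin n) ℝ} {Q : ℕ → Matrix A A ℝ}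
    (hf : ∀ i, 1 ≤ i → i ≤ p → ∀ w, eval w (f i) = ip (Q i) (momMat A (Fin.cons 1 w))) :
    {X ∈ GammaA A ∩ Jset A Q p | ip (H0mat A ω) X = 1} =
      (fun w => momMat A (Fin.cons 1 w)) '' Sset f p := by
  have hslice := Set.ext_iff.1 (setOf_mem_GammaA_ip_H0mat_eq_one h hω)
  rw [GammaA_inter_Jset]
  ext X
  constructor
  · rintro ⟨⟨hΓ, hQ⟩, hX⟩
    obtain ⟨w, hw, rfl⟩ := (hslice X).1 ⟨hΓ, hX⟩
    exact ⟨w, ⟨hw, fun i h1 hi => (hf i h1 hi w).trans (hQ i h1 hi)⟩, rfl⟩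
  · rintro ⟨w, ⟨hw, hS⟩, rfl⟩
    obtain ⟨hΓ, hX⟩ := (hslice _).2 ⟨w, hw, rfl⟩
    exact ⟨⟨hΓ, fun i h1 hi => (hf i h1 hi w).symm.trans (hS i h1 hi)⟩, hX⟩

theorem setOf_ip_GammaA_inter_Jset (h : Finsupp.single 0 ω ∈ A) (hω : ω ≠ 0)
    {p : ℕ} {f : ℕ → MvPolynomial (Fin n) ℝ} {g : MvPolynomial (Fin n) ℝ}
    {Q : ℕ → Matrix A A ℝ} {P : Matrix A A ℝ}
    (hf : ∀ i, 1 ≤ i → i ≤ p → ∀ w, eval w (f i) = ip (Q i) (momMat A (Fin.cons 1 w)))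
    (hg : ∀ w, eval w g = ip P (momMat A (Fin.cons 1 w))) :
    {y : ℝ | ∃ X ∈ GammaA A ∩ Jset A Q p, ip (H0mat A ω) X = 1 ∧ y = ip P X} =
      {y : ℝ | ∃ w ∈ Sset f p, y = eval w g} := by
  have hslice := Set.ext_iff.1 (setOf_mem_GammaA_inter_Jset_ip_H0mat_eq_one h hω hf)
  ext y
  constructor
  · rintro ⟨X, hJ, hX, rfl⟩
    obtain ⟨w, hw, rfl⟩ := (hslice X).1 ⟨hJ, hX⟩
    exact ⟨w, hw, (hg w).symm⟩
  · rintro ⟨w, hw, rfl⟩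
    obtain ⟨hJ, hX⟩ := (hslice _).2 ⟨w, hw, rfl⟩
    exact ⟨_, hJ, hX, hg w⟩

theorem stmt11_general (h : Finsupp.single 0 ω ∈ A) (hω : ω ≠ 0)
    {p : ℕ} {f : ℕ → MvPolynomial (Fin n) ℝ} {g : MvPolynomial (Fin n) ℝ}
    {Q : ℕ → Matrix A A ℝ} {P : Matrix A A ℝ}
    (hf : ∀ i, 1 ≤ i → i ≤ p → ∀ w, eval w (f i) = ip (Q i) (momMat A (Fin.cons 1 w)))
    (hg : ∀ w, eval w g = ip P (momMat A (Fin.cons 1 w))) :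
    {y : ℝ | ∃ X ∈ GammaA A, (∀ i, 1 ≤ i → i ≤ p → ip (Q i) X = 0) ∧
          ip (H0mat A ω) X = 1 ∧ y = ip P X} =
        {y : ℝ | ∃ w ∈ Sset f p, y = eval w g} ∧
      erInf {y : ℝ | ∃ X ∈ GammaA A ∩ Jset A Q p, ip (H0mat A ω) X = 1 ∧ y = ip P X} =
        erInf {y : ℝ | ∃ w ∈ Sset f p, y = eval w g} := by
  have hval := setOf_ip_GammaA_inter_Jset h hω hf hg
  refine ⟨?_, congrArg erInf hval⟩
  simpa only [GammaA_inter_Jset, Set.mem_ofPred_eq, and_assoc] using hval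

end

theorem stmt11
    (n ω m : ℕ) (hn : 0 < n) (hω : 0 < ω) (hm : 0 < m)
    (A : Finset (Fin (n+1) →₀ ℕ)) (hA : A.Nonempty)
    (hAdeg : ∀ α ∈ A, ∑ i, α i = ω)
    (hAtop : Finsupp.single (0 : Fin (n+1)) ω ∈ A)
    (f : ℕ → MvPolynomial (Fin n) ℝ)
    (fb : ℕ → MvPolynomial (Fin (n+1)) ℝ)
    (hfdeg : ∀ i ≤ m, (f i).totalDegree ≤ 2 * ω)
    (hfbhom : ∀ i ≤ m, (fb i).IsHomogeneous (2 * ω))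
    (hfb1 : ∀ i ≤ m, ∀ w : Fin n → ℝ, eval (Fin.cons 1 w) (fb i) = eval w (f i))
    (Q : ℕ → Matrix A A ℝ)
    (hQsymm : ∀ i ≤ m, (Q i).IsSymm)
    (hQrep : ∀ i ≤ m, ∀ x : Fin (n+1) → ℝ, eval x (fb i) = ip (Q i) (momMat A x))
    :
    ∀ p, 1 ≤ p → p ≤ m →
      ({ y : ℝ | ∃ X ∈ GammaA A, (∀ i, 1 ≤ i → i < p → ip (Q i) X = 0) ∧
            ip (H0mat A ω) X = 1 ∧ y = ip (Q p) X }
          = { y : ℝ | ∃ w ∈ Sset f (p - 1), y = eval w (f p) }) ∧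
      erInf { y : ℝ | ∃ X ∈ GammaA A ∩ Jset A Q (p - 1),
            ip (H0mat A ω) X = 1 ∧ y = ip (Q p) X }
        = erInf { y : ℝ | ∃ w ∈ Sset f (p - 1), y = eval w (f p) } := by
  rintro (_ | p) hp hpm
  · contradiction
  simpa only [Order.lt_add_one_iff, Nat.add_sub_cancel] using stmt11_general hAtop hω.ne'
    (fun i _ hi w => (hfb1 i (by lia) w).symm.trans (hQrep i (by lia) _))
    (fun w => (hfb1 _ hpm w).symm.trans (hQrep _ hpm _))
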